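/- Let E : {0,1}^{2^ℓ} × {0,1}^r → {0,1}^m be a (k, ε)-extractor. Then there exists a function Red : ({0,1}^m → {0,1}) × {0,1}^ℓ × {0,1}^{k+1} → {0,1} such that for every f ∈ Func_{ℓ,1} and every D : {0,1}^m → {0,1} that ε-PRG-breaks Con^E_f, there exists α ∈ {0,1}^{k+1} with Red(D, x, α) = f(x) for every x ∈ {0,1}^ℓ. -/

import Mathlib

open scoped BigOperators

attribute [local instance] Classical.propDecidable

noncomputable section

/-- Probability that a uniformly random element of a finite type satisfies `P`. -/
def uPr {X : Type*} [Fintype X] (P : X → Prop) : ℝ :=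
  (Fintype.card {x : X // P x} : ℝ) / (Fintype.card X : ℝ)

/-- Probability of `P` under `t` i.i.d. bits, each equal to `true` with probability `p`. -/
def bPr {t : ℕ} (p : ℝ) (P : (Fin t → Bool) → Prop) : ℝ :=
  ∑ x : Fin t → Bool, if P x then (∏ i, if x i then p else 1 - p) else 0

/-- An adaptive `q`-query oracle procedure with input set `I` and query set `Q`. -/
structure OracleProc (q : ℕ) (I : Type*) (Q : Type*) where
  qry : (i : Fin q) → I → (Fin i.val → Bool) → Q
  out : I → (Fin q → Bool) → Bool

/-- The answer to the `i`-th query when running with oracle `D` on input `w`. -/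
def OracleProc.ans {q : ℕ} {I Q : Type*} (P : OracleProc q I Q) (D : Q → Bool) (w : I)
    (i : Fin q) : Bool :=
  D (P.qry i w (fun j => P.ans D w ⟨j.val, j.isLt.trans i.isLt⟩))
termination_by i.val
decreasing_by exact j.isLt

/-- The output of the oracle procedure, with oracle `D`, on input `w`. -/
def OracleProc.run {q : ℕ} {I Q : Type*} (P : OracleProc q I Q) (D : Q → Bool) (w : I) : Bool :=
  P.out w (P.ans D w)

/-- A clause over `n` Boolean variables: a list of literals (variable, polarity). -/
abbrev BClause (n : ℕ) := List (Fin n × Bool)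

/-- A CNF over `n` Boolean variables: a list of clauses. -/
abbrev BCNF (n : ℕ) := List (BClause n)

def BClause.eval {n : ℕ} (c : BClause n) (x : Fin n → Bool) : Bool :=
  c.any (fun l => x l.1 == l.2)

def BCNF.eval {n : ℕ} (φ : BCNF n) (x : Fin n → Bool) : Bool :=
  φ.all (fun c => BClause.eval c x)

/-- A `q`-CNF: every clause has at most `q` literals. -/
def BCNF.width {n : ℕ} (φ : BCNF n) (q : ℕ) : Prop :=
  ∀ c ∈ φ, c.length ≤ q

/-- Hamming weight. -/
def wt {n : ℕ} (x : Fin n → Bool) : ℕ :=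
  (Finset.univ.filter (fun i => x i = true)).card

/-- The set of free (`*`) positions of a restriction. -/
def freeSet {n : ℕ} (ρ : Fin n → Option Bool) : Finset (Fin n) :=
  Finset.univ.filter (fun i => ρ i = none)

/-- The number of free positions of a restriction. -/
def freeCount {n : ℕ} (ρ : Fin n → Option Bool) : ℕ := (freeSet ρ).card

/-- Fill the free positions of a restriction `ρ` with the bits of `x`, in order. -/
def Fill {n t : ℕ} (ρ : Fin n → Option Bool) (h : freeCount ρ = t)
    (x : Fin t → Bool) : Fin n → Bool := fun i =>
  if hm : i ∈ freeSet ρ then x (((freeSet ρ).orderIsoOfFin h).symm ⟨i, hm⟩)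
  else (ρ i).getD false

/-- The restrictions on `n` variables with exactly `t` free positions. -/
abbrev Restr (n t : ℕ) := {ρ : Fin n → Option Bool // freeCount ρ = t}

/-- Relative Hamming distance. -/
def relDist {n : ℕ} (x y : Fin n → Bool) : ℝ :=
  ((Finset.univ.filter (fun i => x i ≠ y i)).card : ℝ) / n

end
noncomputable section

/-- The probability that `E(X, U_r) ∈ A` when `X` has probability mass function `μ`
and the seed is uniform and independent. -/
def extHitPr {S : Type*} [Fintype S] {r m : ℕ}
    (E : S → (Fin r → Bool) → (Fin m → Bool)) (μ : S → ℝ) (A : (Fin m → Bool) → Prop) : ℝ :=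
  ∑ f : S, ∑ y : Fin r → Bool, if A (E f y) then μ f / 2 ^ r else 0

/-- `E` is a `(k,ε)`-extractor: for every source distribution `μ` with min-entropy at least `k`
(i.e. all point masses at most `2^{-k}`), the output distribution `E(X, U_r)` is `ε`-close to
uniform, i.e. every event has probability within `ε` of its uniform probability. -/
def IsExtractor {S : Type*} [Fintype S] {r m : ℕ}
    (E : S → (Fin r → Bool) → (Fin m → Bool)) (k ε : ℝ) : Prop :=
  ∀ μ : S → ℝ, (∀ f, 0 ≤ μ f) → (∑ f, μ f) = 1 → (∀ f, μ f ≤ (2 : ℝ) ^ (-k)) →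
    ∀ A : (Fin m → Bool) → Prop,
      |extHitPr E μ A - uPr A| ≤ ε

end

/-!
Fix a test `D`. If for `2 ^ k` or more strings `f` the test accepted `E f U_r` with probability
more than `ε` above that of `U_m`, the uniform distribution on these `f` would have min-entropy at
least `k` and contradict the extractor property; the same applies to the complement of `D`. So `D`
breaks the generator `E f` for fewer than `2 ^ (k + 1)` strings `f`, and the advice is an index into
the list of these.
-/

theorem uPr_not {X : Type*} [Fintype X] [Nonempty X] (P : X → Prop) :
    uPr (fun x => ¬P x) = 1 - uPr P := by
  have card_ne_zero : (Fintype.card X : ℝ) ≠ 0 := Nat.cast_ne_zero.mpr Fintype.card_ne_zero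
  rw [uPr, uPr, Fintype.card_subtype_compl, Nat.cast_sub (Fintype.card_subtype_le P), sub_div,
    div_self card_ne_zero]

/-- The signed advantage of the test `A` against the generator `G`: by how much the probability of
accepting a pseudorandom string exceeds that of accepting a uniform one. The test `ε`-PRG-breaks `G`
when the absolute value of this is greater than `ε`. -/
noncomputable def prgBias {r m : ℕ} (G : (Fin r → Bool) → (Fin m → Bool))
    (A : (Fin m → Bool) → Prop) : ℝ :=
  uPr (fun y => A (G y)) - uPr A

theorem prgBias_not {r m : ℕ} (G : (Fin r → Bool) → (Fin m → Bool))
    (A : (Fin m → Bool) → Prop) : prgBias G (fun u => ¬A u) = -prgBias G A := by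
  rw [prgBias, prgBias, uPr_not, uPr_not]
  ring

/-- The uniform distribution on `T`, as a probability mass function on the ambient type. It is
identically zero when `T` is empty. -/
noncomputable def flatSource {S : Type*} (T : Finset S) (f : S) : ℝ :=
  if f ∈ T then (T.card : ℝ)⁻¹ else 0

section FlatSource

variable {S : Type*} (T : Finset S)

theorem flatSource_nonneg (f : S) : 0 ≤ flatSource T f := by
  unfold flatSource
  split_ifs <;> positivity

theorem flatSource_le (f : S) : flatSource T f ≤ (T.card : ℝ)⁻¹ := by
  unfold flatSource
  split_ifs
  · exact le_rfl
  · positivity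

theorem sum_flatSource_mul [Fintype S] (g : S → ℝ) :
    ∑ f, flatSource T f * g f = (T.card : ℝ)⁻¹ * ∑ f ∈ T, g f := by
  simp only [flatSource, ite_mul, zero_mul, Finset.sum_ite_mem, Finset.univ_inter, Finset.mul_sum]

theorem sum_flatSource [Fintype S] (hT : T.Nonempty) : ∑ f, flatSource T f = 1 := by
  have card_ne_zero : (T.card : ℝ) ≠ 0 := Nat.cast_ne_zero.mpr hT.card_ne_zero
  calc ∑ f, flatSource T f = ∑ f, flatSource T f * 1 := by simp only [mul_one]
    _ = (T.card : ℝ)⁻¹ * T.card := by rw [sum_flatSource_mul, Finset.sum_const, nsmul_one]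
    _ = 1 := inv_mul_cancel₀ card_ne_zero

end FlatSource

section Extractor

variable {S : Type*} [Fintype S] {r m : ℕ} (E : S → (Fin r → Bool) → (Fin m → Bool))

theorem extHitPr_eq_sum_mul_uPr (μ : S → ℝ) (A : (Fin m → Bool) → Prop) :
    extHitPr E μ A = ∑ f, μ f * uPr (fun y => A (E f y)) := by
  refine Finset.sum_congr rfl fun f _ => ?_
  rw [← Finset.sum_filter, Finset.sum_const, uPr, Fintype.card_subtype, nsmul_eq_mul,
    Fintype.card_fun, Fintype.card_bool, Fintype.card_fin, Nat.cast_pow, Nat.cast_ofNat]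
  ring

theorem extHitPr_sub_uPr {μ : S → ℝ} (hμ : ∑ f, μ f = 1) (A : (Fin m → Bool) → Prop) :
    extHitPr E μ A - uPr A = ∑ f, μ f * prgBias (E f) A := by
  simp only [prgBias, mul_sub, Finset.sum_sub_distrib, ← Finset.sum_mul, hμ, one_mul,
    extHitPr_eq_sum_mul_uPr]

variable {E}

theorem IsExtractor.abs_average_prgBias_le {k ε : ℝ} (hE : IsExtractor E k ε) {T : Finset S}
    (hT : (2 : ℝ) ^ k ≤ T.card) (A : (Fin m → Bool) → Prop) :
    |(T.card : ℝ)⁻¹ * ∑ f ∈ T, prgBias (E f) A| ≤ ε := by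
  have two_pow_pos : (0 : ℝ) < 2 ^ k := Real.rpow_pos_of_pos two_pos k
  have nonempty : T.Nonempty := Finset.card_pos.mp (Nat.cast_pos.mp (two_pow_pos.trans_le hT))
  have min_entropy (f : S) : flatSource T f ≤ (2 : ℝ) ^ (-k) := by
    rw [Real.rpow_neg two_pos.le]
    exact (flatSource_le T f).trans (inv_anti₀ two_pow_pos hT)
  rw [← sum_flatSource_mul, ← extHitPr_sub_uPr E (sum_flatSource T nonempty)]
  exact hE _ (flatSource_nonneg T) (sum_flatSource T nonempty) min_entropy A

theorem IsExtractor.card_filter_prgBias_lt {k ε : ℝ} (hE : IsExtractor E k ε)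
    (A : (Fin m → Bool) → Prop) :
    (({f | ε < prgBias (E f) A} : Finset S).card : ℝ) < 2 ^ k := by
  set T : Finset S := {f | ε < prgBias (E f) A}
  by_contra! large
  have card_pos : (0 : ℝ) < T.card := (Real.rpow_pos_of_pos two_pos k).trans_le large
  have average_le : (T.card : ℝ)⁻¹ * ∑ f ∈ T, prgBias (E f) A ≤ ε :=
    (le_abs_self _).trans (hE.abs_average_prgBias_le large A)
  have lt_sum : T.card * ε < ∑ f ∈ T, prgBias (E f) A := by
    rw [← nsmul_eq_mul, ← Finset.sum_const]
    exact Finset.sum_lt_sum_of_nonempty (Finset.card_pos.mp (Nat.cast_pos.mp card_pos))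
      fun f hf => (Finset.mem_filter.mp hf).2
  exact lt_sum.not_ge ((inv_mul_le_iff₀ card_pos).mp average_le)

theorem IsExtractor.card_filter_abs_prgBias_lt {k ε : ℝ} (hE : IsExtractor E k ε)
    (A : (Fin m → Bool) → Prop) :
    (({f | ε < |prgBias (E f) A|} : Finset S).card : ℝ) < 2 ^ (k + 1) := by
  have union_eq : ({f | ε < |prgBias (E f) A|} : Finset S) =
      ({f | ε < prgBias (E f) A} : Finset S) ∪
        ({f | ε < prgBias (E f) fun u => ¬A u} : Finset S) := by
    simp only [lt_abs, prgBias_not, Finset.filter_or]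
  calc (({f | ε < |prgBias (E f) A|} : Finset S).card : ℝ)
      ≤ ({f | ε < prgBias (E f) A} : Finset S).card +
          ({f | ε < prgBias (E f) fun u => ¬A u} : Finset S).card := by
        rw [union_eq]
        exact_mod_cast Finset.card_union_le _ _
    _ < 2 ^ k + 2 ^ k := add_lt_add (hE.card_filter_prgBias_lt A) (hE.card_filter_prgBias_lt _)
    _ = 2 ^ (k + 1) := by rw [Real.rpow_add_one two_ne_zero, mul_two]

end Extractor

theorem exists_subset_range_of_card_le {S β : Type*} [Nonempty S] [Fintype β] {T : Finset S}
    (hT : T.card ≤ Fintype.card β) : ∃ g : β → S, (T : Set S) ⊆ Set.range g := by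
  obtain ⟨e⟩ := Function.Embedding.nonempty_of_card_le ((Fintype.card_coe T).trans_le hT)
  refine ⟨Function.extend e Subtype.val fun _ => Classical.arbitrary S, fun f hf => ?_⟩
  exact ⟨e ⟨f, hf⟩, e.injective.extend_apply _ _ _⟩

theorem extractor_implies_blackbox_PRG_proof_general {S : Type*} [Fintype S] [Nonempty S]
    {r m k : ℕ} {ε : ℝ} {E : S → (Fin r → Bool) → (Fin m → Bool)}
    (hE : IsExtractor E (k : ℝ) ε) :
    ∃ dec : ((Fin m → Bool) → Bool) → (Fin (k + 1) → Bool) → S,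
      ∀ (f : S) (D : (Fin m → Bool) → Bool),
        |uPr (fun y : Fin r → Bool => D (E f y) = true) -
            uPr (fun u : Fin m → Bool => D u = true)| > ε →
        ∃ α : Fin (k + 1) → Bool, dec D α = f := by
  have card_le (D : (Fin m → Bool) → Bool) :
      ({f | ε < |prgBias (E f) fun u => D u = true|} : Finset S).card ≤
        Fintype.card (Fin (k + 1) → Bool) := by
    rw [Fintype.card_fun, Fintype.card_bool, Fintype.card_fin]
    exact_mod_cast (hE.card_filter_abs_prgBias_lt fun u => D u = true).le
  choose dec subset_range using fun D => exists_subset_range_of_card_le (card_le D)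
  refine ⟨dec, fun f D breaks => subset_range D ?_⟩
  rw [Finset.mem_coe, Finset.mem_filter_univ]
  exact breaks

/-- Proposition 3.4 (2): if `E` is a `(k,ε)`-extractor, then the construction `Con^E` can be
matched with a reduction with advice length `k + 1`. -/
theorem extractor_implies_blackbox_PRG_proof (ℓ r m k : ℕ) (ε : ℝ)
    (E : ((Fin ℓ → Bool) → Bool) → (Fin r → Bool) → (Fin m → Bool))
    (hE : IsExtractor E (k : ℝ) ε) :
    ∃ Red : ((Fin m → Bool) → Bool) → (Fin ℓ → Bool) → (Fin (k + 1) → Bool) → Bool,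
      ∀ (f : (Fin ℓ → Bool) → Bool) (D : (Fin m → Bool) → Bool),
        |uPr (fun y : Fin r → Bool => D (E f y) = true) -
            uPr (fun u : Fin m → Bool => D u = true)| > ε →
        ∃ α : Fin (k + 1) → Bool, ∀ x : Fin ℓ → Bool, Red D x α = f x := by
  obtain ⟨dec, hdec⟩ := extractor_implies_blackbox_PRG_proof_general hE
  exact ⟨fun D x α => dec D α x, fun f D breaks => (hdec f D breaks).imp fun _ => congrFun⟩
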